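/- Let 0 < p_1 < p_2 < ⋯ < p_M and 1 ≤ N ≤ M−1. (a) For each i with 1 ≤ i ≤ M−N, at c = c_{i,N+i} the two N-element index sets {i,…,N+i−1} and {i+1,…,N+i} satisfy Σ_{j=i}^{N+i−1} η_j(c) = Σ_{j=i+1}^{N+i} η_j(c), and for every N-element subset S of {1,…,M} distinct from both of these sets, Σ_{j∈S} η_j(c) < Σ_{j=i}^{N+i−1} η_j(c). (b) For each i with 1 ≤ i ≤ N, at c' = c_{i,M−N+i} the two N-element index sets {1,…,i−1} ∪ {M−N+i,…,M} and {1,…,i} ∪ {M−N+i+1,…,M} have equal sums Σ_{j∈S} η_j(c'), and every other N-element subset S of {1,…,M} has strictly larger sum Σ_{j∈S} η_j(c'). -/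

import Mathlib

open scoped Classical

theorem aux_sum {ι : Type*} [Fintype ι] (η : ι → ℝ) (t : ℝ) (a b : ι) (hab : a ≠ b)
    (K S₁ S₂ : Finset ι) (ha : η a = t) (hb : η b = t) (haK : a ∉ K) (hbK : b ∉ K)
    (h1 : S₁ = insert a K) (h2 : S₂ = insert b K)
    (hK : ∀ l ∈ K, t < η l) (hout : ∀ l, l ∉ K → l ≠ a → l ≠ b → η l < t) :
    (∑ l ∈ S₁, η l) = (∑ l ∈ S₂, η l) ∧
      ∀ S : Finset ι, S.card = S₁.card → S ≠ S₁ → S ≠ S₂ →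
        (∑ l ∈ S, η l) < ∑ l ∈ S₁, η l := by
  subst h1 h2
  refine ⟨by rw [Finset.sum_insert haK, Finset.sum_insert hbK, ha, hb], ?_⟩
  intro S hS hS1 hS2
  have key : ∑ l ∈ S, (η l - t) < ∑ l ∈ K, (η l - t) := by
    have conv : ∀ A : Finset ι,
        ∑ l ∈ A, (η l - t) = ∑ l, if l ∈ A then η l - t else 0 := by
      intro A; simp
    rw [conv S, conv K]
    have hle : ∀ l, (if l ∈ S then η l - t else 0) ≤ (if l ∈ K then η l - t else 0) := by
      intro l
      by_cases hl : l ∈ K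
      · have := hK l hl
        by_cases hs : l ∈ S <;> simp [hl, hs]; linarith
      · by_cases hs : l ∈ S
        · simp only [hl, hs, if_true, if_false]
          by_cases h1 : l = a
          · subst h1; linarith
          by_cases h2 : l = b
          · subst h2; linarith
          linarith [hout l hl h1 h2]
        · simp [hl, hs]
    refine Finset.sum_lt_sum (fun l _ => hle l) ?_
    by_contra! hcon
    have hKS : K ⊆ S := by
      intro l hl
      by_contra hs
      have := hcon l (Finset.mem_univ l)
      simp only [hl, hs, if_true, if_false] at this
      linarith [hK l hl]
    have hSK : ∀ l ∈ S, l ∉ K → l = a ∨ l = b := by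
      intro l hs hl
      by_contra! hne
      have := hcon l (Finset.mem_univ l)
      simp only [hl, hs, if_true, if_false] at this
      linarith [hout l hl hne.1 hne.2]
    have hcb : (insert b K).card = (insert a K).card := by
      rw [Finset.card_insert_of_notMem haK, Finset.card_insert_of_notMem hbK]
    by_cases haS : a ∈ S
    · exact hS1 (Finset.eq_of_subset_of_card_le
        (Finset.insert_subset haS hKS) hS.le).symm
    · apply hS2
      apply Finset.eq_of_subset_of_card_le _ (by omega)
      intro l hs
      rw [Finset.mem_insert]
      by_cases hl : l ∈ K
      · exact Or.inr hl
      · rcases hSK l hs hl with h | h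
        · subst h; exact absurd hs haS
        · exact Or.inl h
  have e1 : ∑ l ∈ insert a K, (η l - t) = ∑ l ∈ K, (η l - t) := by
    rw [Finset.sum_insert haK, ha]; ring
  rw [← e1, Finset.sum_sub_distrib, Finset.sum_sub_distrib, Finset.sum_const, Finset.sum_const,
    hS] at key
  linarith

theorem aux_window (M i n : ℕ) (h : i + n ≤ M) :
    (Finset.univ.filter (fun l : Fin M => i ≤ (l : ℕ) ∧ (l : ℕ) < i + n)).card = n := by
  have : (Finset.univ.filter (fun l : Fin M => i ≤ (l : ℕ) ∧ (l : ℕ) < i + n)).image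
      (fun l : Fin M => (l : ℕ)) = Finset.Ico i (i + n) := by
    ext x
    simp only [Finset.mem_image, Finset.mem_filter, Finset.mem_univ, true_and, Finset.mem_Ico]
    constructor
    · rintro ⟨l, hl, rfl⟩; exact hl
    · intro hx; exact ⟨⟨x, by omega⟩, hx, rfl⟩
  rw [← Finset.card_image_of_injective _ Fin.val_injective, this]
  simp

theorem aux_conc (c x y z : ℝ) (hx : 0 < x) (hxy : x < y) (hyz : y < z) :
    ((z * c + Real.log z) - (y * c + Real.log y)) * (y - x) <
      ((y * c + Real.log y) - (x * c + Real.log x)) * (z - y) := by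
  have h := strictConcaveOn_log_Ioi.slope_anti_adjacent (x := x) (y := y) (z := z)
    hx (by simp only [Set.mem_Ioi]; linarith) hxy hyz
  rw [div_lt_div_iff₀ (by linarith) (by linarith)] at h
  nlinarith

theorem aux_eta (x z : ℝ) (hx : 0 < x) (hxz : x < z) (c : ℝ)
    (hc : c = -(Real.log x - Real.log z) / (x - z)) :
    z * c + Real.log z = x * c + Real.log x ∧
    (∀ y, x < y → y < z → x * c + Real.log x < y * c + Real.log y) ∧
    (∀ y, 0 < y → y < x → y * c + Real.log y < x * c + Real.log x) ∧
    (∀ y, z < y → y * c + Real.log y < x * c + Real.log x) := by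
  have e : z * c + Real.log z = x * c + Real.log x := by
    have : x - z ≠ 0 := by linarith
    have : c * (x - z) = -(Real.log x - Real.log z) := by rw [hc]; field_simp
    linarith
  refine ⟨e, ?_, ?_, ?_⟩
  · intro y h1 h2
    have := aux_conc c x y z hx h1 h2
    rw [e] at this
    by_contra! hh
    nlinarith
  · intro y h0 h1
    have := aux_conc c y x z h0 h1 hxz
    rw [e] at this
    by_contra! hh
    nlinarith
  · intro y h1
    have := aux_conc c x z y hx hxz h1
    rw [e] at this
    by_contra! hh
    nlinarith

/-- dominant-balance lemma for the lines `η_j(c) = p_j·c + log p_j`.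
(a) At `c = c_{i,N+i}` the two consecutive `N`-element index windows
`{i,…,N+i−1}` and `{i+1,…,N+i}` have equal `η`-sums and strictly dominate the
`η`-sum of every other `N`-element index set.
(b) At `c' = c_{i,M−N+i}` the two index sets `{1,…,i−1} ∪ {M−N+i,…,M}` and
`{1,…,i} ∪ {M−N+i+1,…,M}` have equal `η`-sums and every other `N`-element index
set has strictly larger `η`-sum.  (Indices here are 0-based.) -/
theorem stmt_7 (M N : ℕ) (hM : 1 ≤ M) (hN : 1 ≤ N) (hNM : N ≤ M - 1)
    (p : Fin M → ℝ) (hp : ∀ j, 0 < p j) (hpmono : StrictMono p) :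
    (∀ (i : ℕ) (hi : i + N < M),
      let a : Fin M := ⟨i, by omega⟩
      let b : Fin M := ⟨i + N, hi⟩
      let c : ℝ := -(Real.log (p a) - Real.log (p b)) / (p a - p b)
      let η : Fin M → ℝ := fun l => p l * c + Real.log (p l)
      let S₁ : Finset (Fin M) :=
        Finset.univ.filter (fun l : Fin M => i ≤ (l : ℕ) ∧ (l : ℕ) < i + N)
      let S₂ : Finset (Fin M) :=
        Finset.univ.filter (fun l : Fin M => i + 1 ≤ (l : ℕ) ∧ (l : ℕ) < i + N + 1)
      (∑ l ∈ S₁, η l) = (∑ l ∈ S₂, η l) ∧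
      ∀ S : Finset (Fin M), S.card = N → S ≠ S₁ → S ≠ S₂ →
        (∑ l ∈ S, η l) < ∑ l ∈ S₁, η l) ∧
    (∀ (i : ℕ) (hi : i < N),
      let a : Fin M := ⟨i, by omega⟩
      let b : Fin M := ⟨M - N + i, by omega⟩
      let c : ℝ := -(Real.log (p a) - Real.log (p b)) / (p a - p b)
      let η : Fin M → ℝ := fun l => p l * c + Real.log (p l)
      let T₁ : Finset (Fin M) :=
        Finset.univ.filter (fun l : Fin M => (l : ℕ) < i ∨ M - N + i ≤ (l : ℕ))
      let T₂ : Finset (Fin M) :=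
        Finset.univ.filter (fun l : Fin M => (l : ℕ) < i + 1 ∨ M - N + i + 1 ≤ (l : ℕ))
      (∑ l ∈ T₁, η l) = (∑ l ∈ T₂, η l) ∧
      ∀ S : Finset (Fin M), S.card = N → S ≠ T₁ → S ≠ T₂ →
        (∑ l ∈ T₁, η l) < ∑ l ∈ S, η l) := by
  constructor
  · intro i hi a b c η S₁ S₂
    have hab : a < b := by simp only [a, b, Fin.lt_def]; omega
    obtain ⟨e, hmid, hlo, hhi⟩ := aux_eta (p a) (p b) (hp a) (hpmono hab) c rfl
    have hc : S₁.card = N := by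
      have := aux_window M i N hi.le
      convert this
    have := aux_sum η (η a) a b hab.ne
      (Finset.univ.filter (fun l : Fin M => a < l ∧ l < b)) S₁ S₂ rfl e
      (by simp) (by simp)
      (by
        ext l
        simp only [S₁, a, b, Finset.mem_insert, Finset.mem_filter, Finset.mem_univ, true_and,
          Fin.lt_def, Fin.ext_iff]
        omega)
      (by
        ext l
        simp only [S₂, a, b, Finset.mem_insert, Finset.mem_filter, Finset.mem_univ, true_and,
          Fin.lt_def, Fin.ext_iff]
        omega)
      (by
        intro l hl
        simp only [Finset.mem_filter, Finset.mem_univ, true_and] at hl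
        exact hmid _ (hpmono hl.1) (hpmono hl.2))
      (by
        intro l hl h1 h2
        simp only [Finset.mem_filter, Finset.mem_univ, true_and] at hl
        rcases lt_or_gt_of_ne h1 with h | h
        · exact hlo _ (hp l) (hpmono h)
        · rcases lt_or_gt_of_ne h2 with h' | h'
          · exact absurd ⟨h, h'⟩ hl
          · exact hhi _ (hpmono h'))
    rw [hc] at this
    exact this
  · intro i hi a b c η T₁ T₂
    have hab : a < b := by simp only [a, b, Fin.lt_def]; omega
    obtain ⟨e, hmid, hlo, hhi⟩ := aux_eta (p a) (p b) (hp a) (hpmono hab) c rfl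
    have hc : T₁.card = N := by
      have h1 := aux_window M i (M - N) (by omega)
      have h2 : T₁ᶜ = Finset.univ.filter
          (fun l : Fin M => i ≤ (l : ℕ) ∧ (l : ℕ) < i + (M - N)) := by
        ext l
        simp only [T₁, Finset.mem_compl, Finset.mem_filter, Finset.mem_univ, true_and]
        omega
      have h3 := Finset.card_add_card_compl T₁
      rw [h2, Fintype.card_fin] at h3
      have h4 : T₁.card + (M - N) = M := by
        rw [← h1]
        convert h3 using 1
      omega
    have := aux_sum (fun l => - η l) (- η a) b a hab.ne'
      (Finset.univ.filter (fun l : Fin M => l < a ∨ b < l)) T₁ T₂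
      (by exact congrArg Neg.neg e) rfl
      (by simp [hab.le]) (by simp [hab.le])
      (by
        ext l
        simp only [T₁, a, b, Finset.mem_insert, Finset.mem_filter, Finset.mem_univ, true_and,
          Fin.lt_def, Fin.ext_iff]
        omega)
      (by
        ext l
        simp only [T₂, a, b, Finset.mem_insert, Finset.mem_filter, Finset.mem_univ, true_and,
          Fin.lt_def, Fin.ext_iff]
        omega)
      (by
        intro l hl
        simp only [Finset.mem_filter, Finset.mem_univ, true_and] at hl
        rcases hl with h | h
        · exact neg_lt_neg (hlo _ (hp l) (hpmono h))
        · exact neg_lt_neg (hhi _ (hpmono h)))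
      (by
        intro l hl h2 h1
        simp only [Finset.mem_filter, Finset.mem_univ, true_and, not_or, not_lt] at hl
        exact neg_lt_neg (hmid _ (hpmono (lt_of_le_of_ne hl.1 (Ne.symm h1)))
          (hpmono (lt_of_le_of_ne hl.2 h2))))
    rw [hc] at this
    simp only [Finset.sum_neg_distrib, neg_inj, neg_lt_neg_iff] at this
    exact this
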